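/- Let n ≥ 2 be an integer. For every sequence (γ_i)_{i≥1} with γ_i ∈ π_n(Y_i^{(n)}, 0) satisfying the compatibility condition (r_k^i)_*(γ_i) = γ_k for all k ≤ i, there exists γ ∈ π_n(ℋ_n, 0) such that (R_i)_*(γ) = γ_i for every i ≥ 1. That is, the natural homomorphism β_n : π_n(ℋ_n, 0) → lim← π_n(Y_i^{(n)}, 0) is surjective. -/

import Mathlib

open scoped Topology Topology.Homotopy unitInterval

noncomputable section

/-- The `n`-sphere of radius `1/j` centered at `(1/j, 0, …, 0)` in `ℝ^{n+1}`
(it passes through the origin). -/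
def hawSphere (n j : ℕ) : Set (EuclideanSpace ℝ (Fin (n+1))) :=
  Metric.sphere (EuclideanSpace.single (0 : Fin (n+1)) ((1 : ℝ)/j)) (1/j)

/-- The `n`-dimensional Hawaiian earring: the union of the spheres `hawSphere n j`, `j ≥ 1`. -/
def hawaiian (n : ℕ) : Set (EuclideanSpace ℝ (Fin (n+1))) :=
  ⋃ j ∈ {j : ℕ | 1 ≤ j}, hawSphere n j

/-- The union `Y_i^{(n)}` of the first `i` spheres of the `n`-dimensional Hawaiian earring. -/
def Ysub (n i : ℕ) : Set (EuclideanSpace ℝ (Fin (n+1))) :=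
  ⋃ j ∈ Finset.Icc 1 i, hawSphere n j

lemma zero_mem_hawSphere (n j : ℕ) : (0 : EuclideanSpace ℝ (Fin (n+1))) ∈ hawSphere n j := by
  have : dist (0 : EuclideanSpace ℝ (Fin (n+1)))
      (EuclideanSpace.single (0 : Fin (n+1)) ((1 : ℝ)/j)) = 1/j := by
    rw [dist_zero_left, EuclideanSpace.norm_single, Real.norm_eq_abs,
      abs_of_nonneg (one_div_nonneg.mpr (Nat.cast_nonneg j))]
  exact Metric.mem_sphere.mpr this

lemma zero_mem_hawaiian (n : ℕ) : (0 : EuclideanSpace ℝ (Fin (n+1))) ∈ hawaiian n :=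
  Set.mem_biUnion (by simp : (1 : ℕ) ∈ {j : ℕ | 1 ≤ j}) (zero_mem_hawSphere n 1)

lemma zero_mem_Ysub (n i : ℕ) : (0 : EuclideanSpace ℝ (Fin (n+1))) ∈ Ysub n (i+1) :=
  Set.mem_biUnion (by simp : (1 : ℕ) ∈ Finset.Icc 1 (i+1)) (zero_mem_hawSphere n 1)

/-- The basepoint (the origin) of the Hawaiian earring. -/
def hawaiianPt (n : ℕ) : ↥(hawaiian n) := ⟨0, zero_mem_hawaiian n⟩

/-- The basepoint (the origin) of `Y_{i+1}^{(n)}`. -/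
def YsubPt (n i : ℕ) : ↥(Ysub n (i+1)) := ⟨0, zero_mem_Ysub n i⟩

/-- Composition of a generalized loop with a basepoint-preserving continuous map. -/
def GenLoop.compCM {X Y : Type*} [TopologicalSpace X] [TopologicalSpace Y] {x : X} {y : Y}
    {N : Type*} (φ : C(X, Y)) (hφ : φ x = y) (p : Ω^ N X x) : Ω^ N Y y :=
  ⟨φ.comp p.1, fun t ht => by
    simp only [ContinuousMap.comp_apply]
    rw [p.2 t ht, hφ]⟩

/-- The homomorphism `φ_*` induced on `N`-th homotopy groups by a basepoint-preserving
continuous map `φ`, sending the class of a loop `f` to the class of `φ ∘ f`. -/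
def piInduced {X Y : Type*} [TopologicalSpace X] [TopologicalSpace Y] {x : X} {y : Y}
    (N : Type*) (φ : C(X, Y)) (hφ : φ x = y) :
    HomotopyGroup N X x → HomotopyGroup N Y y :=
  Quotient.map (GenLoop.compCM φ hφ) fun _ _ h =>
    h.map fun F => F.compContinuousMap φ

/-!
Write `q` for the number of cube coordinates. A class in `π_q(Y_{i+2})` is the product of the class
of a loop in the last sphere and of its image under `π_q(Y_{i+2}) → π_q(Y_{i+1}) → π_q(Y_{i+2})`.
Indeed, split a loop into its parts `fA` in `Y_{i+1}` and `fB` in the last sphere, and fix one of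
the coordinates. Consider the pairs of cube points on a common line in that direction such that `fA`
sends the first, and `fB` the second, to a pole (a point opposite to the basepoint). These are `2n`
conditions in dimension `q + 1 < 2n`, so after a generic perturbation there are no such pairs. The
projections of the two preimages of the poles along the direction are then disjoint closed sets,
hence are separated by the graph of a continuous function of the other coordinates. Pushing `fA` to
the basepoint above the graph and `fB` below it displays the loop as a concatenation.

For a compatible sequence this writes `γ_{i+1}` as `b_i * γ_i` with loops `b_i` in spheres that
shrink to the basepoint. The infinite concatenation `e_i` of `b_i, b_{i+1}, …` is therefore
continuous, with `e_i = e_{i+1} * b_i` in the homotopy group, whence `e_i * γ_i` is a class in the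
Hawaiian earring which does not depend on `i`. Its image in `Y_{i+1}` is `γ_i`, since the
retraction to `Y_{i+1}` is constant on `e_i`.
-/

section InducedMaps

variable {N X Y Z : Type*} [TopologicalSpace X] [TopologicalSpace Y] [TopologicalSpace Z]
  {x : X} {y : Y} {z : Z}

/-- The class of a generalized loop in the homotopy group. -/
def loopClass (p : Ω^ N X x) : HomotopyGroup N X x := ⟦p⟧

lemma exists_loopClass_eq (g : HomotopyGroup N X x) : ∃ p, loopClass p = g :=
  Quotient.exists_rep g

lemma loopClass_eq_loopClass {p q : Ω^ N X x} (h : GenLoop.Homotopic p q) :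
    loopClass p = loopClass q :=
  Quotient.sound h

lemma piInduced_loopClass {φ : C(X, Y)} (hφ : φ x = y) {p : Ω^ N X x} {q : Ω^ N Y y}
    (h : ∀ t, φ (p t) = q t) : piInduced N φ hφ (loopClass p) = loopClass q :=
  congrArg loopClass (GenLoop.ext (GenLoop.compCM φ hφ p) q h)

lemma piInduced_piInduced {φ : C(X, Y)} (hφ : φ x = y) {ψ : C(Y, Z)} (hψ : ψ y = z)
    {χ : C(X, Z)} (hχ : χ x = z) (h : ∀ p, ψ (φ p) = χ p) (g : HomotopyGroup N X x) :
    piInduced N ψ hψ (piInduced N φ hφ g) = piInduced N χ hχ g := by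
  obtain ⟨p, rfl⟩ := exists_loopClass_eq g
  rw [piInduced_loopClass hφ (q := GenLoop.compCM φ hφ p) fun _ => rfl,
    piInduced_loopClass hψ (q := GenLoop.compCM χ hχ p) fun t => h (p t),
    piInduced_loopClass hχ (q := GenLoop.compCM χ hχ p) fun _ => rfl]

lemma piInduced_eq_self {φ : C(X, X)} (hφ : φ x = x) (h : ∀ p, φ p = p)
    (g : HomotopyGroup N X x) : piInduced N φ hφ g = g := by
  obtain ⟨p, rfl⟩ := exists_loopClass_eq g
  exact piInduced_loopClass hφ fun t => h (p t)

variable [DecidableEq N]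

lemma transAt_apply (c : N) (a b : Ω^ N X x) (t : N → I) :
    GenLoop.transAt c a b t = if (t c : ℝ) ≤ 1 / 2
      then a (Function.update t c (Set.projIcc 0 1 zero_le_one (2 * t c)))
      else b (Function.update t c (Set.projIcc 0 1 zero_le_one (2 * t c - 1))) := rfl

variable [Nonempty N]

lemma loopClass_transAt (c : N) (a b : Ω^ N X x) :
    loopClass (GenLoop.transAt c a b) = loopClass b * loopClass a :=
  HomotopyGroup.mul_spec.symm

lemma piInduced_mul (φ : C(X, Y)) (hφ : φ x = y) (g h : HomotopyGroup N X x) :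
    piInduced N φ hφ (g * h) = piInduced N φ hφ g * piInduced N φ hφ h := by
  obtain ⟨p, rfl⟩ := exists_loopClass_eq g
  obtain ⟨q, rfl⟩ := exists_loopClass_eq h
  let c : N := Classical.arbitrary N
  rw [← loopClass_transAt c, piInduced_loopClass hφ (q := GenLoop.compCM φ hφ p) fun _ => rfl,
    piInduced_loopClass hφ (q := GenLoop.compCM φ hφ q) fun _ => rfl, ← loopClass_transAt c]
  refine piInduced_loopClass hφ fun t => ?_
  simp only [transAt_apply, apply_ite φ]
  rfl

lemma piInduced_loopClass_eq_one {φ : C(X, Y)} (hφ : φ x = y) {p : Ω^ N X x}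
    (h : ∀ t, φ (p t) = y) : piInduced N φ hφ (loopClass p) = 1 :=
  piInduced_loopClass hφ h

end InducedMaps

section CutAlongGraph

open Set.Icc

variable {N X : Type*} [TopologicalSpace X] {x : X} [DecidableEq N]

lemma continuous_convexComb_uncurry :
    Continuous fun p : I × I × I => convexComb p.1 p.2.1 p.2.2 :=
  Continuous.subtype_mk (by fun_prop) _

lemma update_mem_boundary {c : N} {t : N → I} (ht : t ∈ Cube.boundary N) {s : I}
    (h0 : t c = 0 → s = 0) (h1 : t c = 1 → s = 1) :
    Function.update t c s ∈ Cube.boundary N := by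
  obtain ⟨l, hl⟩ := ht
  refine ⟨l, ?_⟩
  obtain rfl | hlc := eq_or_ne l c
  · simpa only [Function.update_self] using hl.imp h0 h1
  · rwa [Function.update_of_ne hlc]

lemma homotopic_of_reparam (c : N) {f g : Ω^ N X x} {θ : (N → I) → I} (hθ : Continuous θ)
    (h0 : ∀ t, t c = 0 → θ t = 0) (h1 : ∀ t, t c = 1 → θ t = 1)
    (hg : ∀ t, g t = f (Function.update t c (θ t))) : GenLoop.Homotopic f g := by
  let line : I × (N → I) → I := fun p => convexComb (p.2 c) (θ p.2) p.1
  have hline : Continuous line := continuous_convexComb_uncurry.comp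
    (((continuous_apply c).comp continuous_snd).prodMk
      ((hθ.comp continuous_snd).prodMk continuous_fst))
  refine ⟨⟨⟨⟨fun p => f (Function.update p.2 c (line p)),
    f.1.continuous.comp (continuous_snd.update c hline)⟩, fun t => ?_, fun t => ?_⟩, ?_⟩⟩
  · simp [line]
  · simpa [line] using (hg t).symm
  · intro s t ht
    have hb : Function.update t c (line (s, t)) ∈ Cube.boundary N :=
      update_mem_boundary ht (fun h => by simp [line, h, h0 t h])
        fun h => by simp [line, h, h1 t h]
    exact (f.2 _ hb).trans (f.2 t ht).symm

lemma homotopic_transAt_of_eq_convexComb (c : N) {f a b : Ω^ N X x} {φ : (N → I) → I}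
    (hφ : Continuous φ) (hφc : ∀ t s, φ (Function.update t c s) = φ t)
    (ha : ∀ t, a t = f (Function.update t c (convexComb 0 (φ t) (t c))))
    (hb : ∀ t, b t = f (Function.update t c (convexComb (φ t) 1 (t c)))) :
    GenLoop.Homotopic f (GenLoop.transAt c a b) := by
  let θ : (N → I) → I := fun t => convexComb
    (convexComb 0 (φ t) (Set.projIcc 0 1 zero_le_one (2 * t c))) 1
    (Set.projIcc 0 1 zero_le_one (2 * t c - 1))
  have hfirst : Continuous fun t : N → I => Set.projIcc (0 : ℝ) 1 zero_le_one (2 * t c) :=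
    continuous_projIcc.comp (by fun_prop)
  have hsecond : Continuous fun t : N → I => Set.projIcc (0 : ℝ) 1 zero_le_one (2 * t c - 1) :=
    continuous_projIcc.comp (by fun_prop)
  have hθ : Continuous θ := continuous_convexComb_uncurry.comp
    ((continuous_convexComb_uncurry.comp
      (continuous_const.prodMk (hφ.prodMk hfirst))).prodMk (continuous_const.prodMk hsecond))
  refine homotopic_of_reparam c hθ (fun t h => ?_) (fun t h => ?_) fun t => ?_
  · simp [θ, h, Set.projIcc_of_le_left]
  · norm_num [θ, h, Set.projIcc_of_right_le]
  · rw [transAt_apply]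
    split_ifs with h
    · have hθt : θ t = convexComb 0 (φ t) (Set.projIcc 0 1 zero_le_one (2 * t c)) := by
        simp [θ, Set.projIcc_of_le_left (zero_le_one' ℝ) (by linarith : 2 * (t c : ℝ) - 1 ≤ 0)]
      simp [ha, hθt, hφc]
    · have hθt : θ t = convexComb (φ t) 1 (Set.projIcc 0 1 zero_le_one (2 * t c - 1)) := by
        simp [θ, Set.projIcc_of_right_le (zero_le_one' ℝ) (by linarith : 1 ≤ 2 * (t c : ℝ))]
      simp [hb, hθt, hφc]

theorem exists_homotopic_transAt_of_graph (c : N) (f : Ω^ N X x) {φ : (N → I) → I}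
    (hφ : Continuous φ) (hφc : ∀ t s, φ (Function.update t c s) = φ t)
    (hf : ∀ t, t c = φ t → f t = x) :
    ∃ a b : Ω^ N X x, GenLoop.Homotopic f (GenLoop.transAt c a b) ∧
      (∀ t, ∃ s, s c ≤ φ s ∧ f s = a t) ∧ (∀ t, ∃ s, φ s ≤ s c ∧ f s = b t) := by
  have hbelow : Continuous fun t : N → I => convexComb 0 (φ t) (t c) :=
    continuous_convexComb_uncurry.comp (continuous_const.prodMk (hφ.prodMk (continuous_apply c)))
  have habove : Continuous fun t : N → I => convexComb (φ t) 1 (t c) :=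
    continuous_convexComb_uncurry.comp (hφ.prodMk (continuous_const.prodMk (continuous_apply c)))
  let a : Ω^ N X x := ⟨⟨_, f.1.continuous.comp (continuous_id.update c hbelow)⟩, fun t ht => by
    by_cases h1 : t c = 1
    · exact hf _ (by simp [hφc, h1])
    · exact f.2 _ (update_mem_boundary ht (fun h => by simp [h]) fun h => absurd h h1)⟩
  let b : Ω^ N X x := ⟨⟨_, f.1.continuous.comp (continuous_id.update c habove)⟩, fun t ht => by
    by_cases h0 : t c = 0
    · exact hf _ (by simp [hφc, h0])
    · exact f.2 _ (update_mem_boundary ht (fun h => absurd h h0) fun h => by simp [h])⟩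
  refine ⟨a, b, homotopic_transAt_of_eq_convexComb c hφ hφc (fun _ => rfl) fun _ => rfl,
    fun t => ⟨_, ?_, rfl⟩, fun t => ⟨_, ?_, rfl⟩⟩
  · simpa [hφc] using convexComb_le unitInterval.nonneg' (t c)
  · simpa [hφc] using le_convexComb unitInterval.le_one' (t c)

end CutAlongGraph

section InfiniteConcatenation

open Filter

variable {N X : Type*} [DecidableEq N]

/-- The concatenation `b k ⬝ (b (k + 1) ⬝ (⋯ ⬝ (b (k + j - 1) ⬝ const)))` along the coordinate `c`,
the `j`-th approximation to the infinite concatenation `b k ⬝ (b (k + 1) ⬝ ⋯)`. -/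
def finConcat [TopologicalSpace X] {x : X} (c : N) (b : ℕ → Ω^ N X x) : ℕ → ℕ → Ω^ N X x
  | _, 0 => GenLoop.const
  | k, j + 1 => GenLoop.transAt c (b k) (finConcat c b (k + 1) j)

section Topological

variable [TopologicalSpace X] {x : X} (c : N) (b : ℕ → Ω^ N X x)

lemma finConcat_succ_apply (k j : ℕ) (t : N → I) :
    finConcat c b k (j + 1) t = if (t c : ℝ) ≤ 1 / 2
      then b k (Function.update t c (Set.projIcc 0 1 zero_le_one (2 * t c)))
      else finConcat c b (k + 1) j
        (Function.update t c (Set.projIcc 0 1 zero_le_one (2 * t c - 1))) := rfl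

lemma finConcat_succ_eq_of_ne {k j : ℕ} {t : N → I} (h : finConcat c b k j t ≠ x) :
    finConcat c b k (j + 1) t = finConcat c b k j t := by
  induction j generalizing k t with
  | zero => exact absurd rfl h
  | succ j ih =>
    rw [finConcat_succ_apply] at h
    rw [finConcat_succ_apply, finConcat_succ_apply c b k j]
    split_ifs at h ⊢
    · rfl
    · exact ih h

lemma finConcat_eq_basepoint_or_mem (k j : ℕ) (t : N → I) :
    finConcat c b k j t = x ∨ ∃ i ≥ k, finConcat c b k j t ∈ Set.range (b i) := by
  induction j generalizing k t with
  | zero => exact Or.inl rfl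
  | succ j ih =>
    rw [finConcat_succ_apply]
    split_ifs
    · exact Or.inr ⟨k, le_rfl, Set.mem_range_self _⟩
    · exact (ih (k + 1) _).imp_right fun ⟨i, hi, h⟩ => ⟨i, by omega, h⟩

lemma exists_eventually_finConcat_eq (k : ℕ) (t : N → I) :
    ∃ z, ∀ᶠ j in atTop, finConcat c b k j t = z := by
  by_cases! h : ∃ J, finConcat c b k J t ≠ x
  · obtain ⟨J, hJ⟩ := h
    refine ⟨finConcat c b k J t, eventually_atTop.2 ⟨J, fun j hj => ?_⟩⟩
    induction j, hj using Nat.le_induction with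
    | base => rfl
    | succ j _ ih => rw [finConcat_succ_eq_of_ne c b (ih ▸ hJ), ih]
  · exact ⟨x, Eventually.of_forall h⟩

/-- The underlying function of the infinite concatenation `b k ⬝ (b (k + 1) ⬝ ⋯)`: the eventual
value of the finite concatenations. -/
def infConcat (k : ℕ) (t : N → I) : X :=
  (exists_eventually_finConcat_eq c b k t).choose

lemma eventually_finConcat_eq (k : ℕ) (t : N → I) :
    ∀ᶠ j in atTop, finConcat c b k j t = infConcat c b k t :=
  (exists_eventually_finConcat_eq c b k t).choose_spec

lemma infConcat_eq_ite (k : ℕ) (t : N → I) :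
    infConcat c b k t = if (t c : ℝ) ≤ 1 / 2
      then b k (Function.update t c (Set.projIcc 0 1 zero_le_one (2 * t c)))
      else infConcat c b (k + 1)
        (Function.update t c (Set.projIcc 0 1 zero_le_one (2 * t c - 1))) := by
  obtain ⟨j, hj, hj'⟩ := (((tendsto_add_atTop_nat 1).eventually
    (eventually_finConcat_eq c b k t)).and (eventually_finConcat_eq c b (k + 1)
      (Function.update t c (Set.projIcc 0 1 zero_le_one (2 * t c - 1))))).exists
  rw [← hj, ← hj', finConcat_succ_apply]

lemma infConcat_eq_basepoint_or_mem (k : ℕ) (t : N → I) :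
    infConcat c b k t = x ∨ ∃ i ≥ k, infConcat c b k t ∈ Set.range (b i) := by
  obtain ⟨j, hj⟩ := (eventually_finConcat_eq c b k t).exists
  simpa only [hj] using finConcat_eq_basepoint_or_mem c b k j t

lemma infConcat_of_mem_boundary {t : N → I} (ht : t ∈ Cube.boundary N) (k : ℕ) :
    infConcat c b k t = x := by
  obtain ⟨j, hj⟩ := (eventually_finConcat_eq c b k t).exists
  exact hj.symm.trans ((finConcat c b k j).2 t ht)

lemma finConcat_eq_infConcat_or (k j : ℕ) (t : N → I) :
    finConcat c b k j t = infConcat c b k t ∨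
      finConcat c b k j t = x ∧ ∃ i ≥ k + j, infConcat c b k t ∈ Set.range (b i) := by
  induction j generalizing k t with
  | zero =>
    exact (infConcat_eq_basepoint_or_mem c b k t).imp (fun h => h.symm) fun h => ⟨rfl, h⟩
  | succ j ih =>
    rw [finConcat_succ_apply, infConcat_eq_ite]
    split_ifs
    · exact Or.inl rfl
    · exact (ih (k + 1) _).imp_right fun ⟨hx, i, hi, h⟩ => ⟨hx, i, by omega, h⟩

end Topological

variable [UniformSpace X] {x : X} (c : N) {b : ℕ → Ω^ N X x}

lemma continuous_infConcat (hb : TendstoUniformly (fun k => ⇑(b k)) (fun _ => x) atTop) (k : ℕ) :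
    Continuous (infConcat c b k) := by
  have hlim : TendstoUniformly (fun j => ⇑(finConcat c b k j)) (infConcat c b k) atTop := by
    intro V hV
    obtain ⟨K, hK⟩ := eventually_atTop.1 (hb _ (symm_le_uniformity hV))
    filter_upwards [eventually_ge_atTop K] with j hj t
    obtain h | ⟨hx, i, hi, s, hs⟩ := finConcat_eq_infConcat_or c b k j t
    · rw [h]
      exact refl_mem_uniformity hV
    · rw [hx, ← hs]
      exact hK i (by omega) s
  exact hlim.continuous (Frequently.of_forall fun j => (finConcat c b k j).1.continuous)

theorem exists_infinite_concatenation
    (hb : TendstoUniformly (fun k => ⇑(b k)) (fun _ => x) atTop) :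
    ∃ e : ℕ → Ω^ N X x, (∀ k, e k = GenLoop.transAt c (b k) (e (k + 1))) ∧
      ∀ k t, e k t = x ∨ ∃ i ≥ k, e k t ∈ Set.range (b i) :=
  ⟨fun k => ⟨⟨infConcat c b k, continuous_infConcat c hb k⟩,
      fun _ ht => infConcat_of_mem_boundary c b ht k⟩,
    fun k => GenLoop.ext _ _ (infConcat_eq_ite c b k), infConcat_eq_basepoint_or_mem c b⟩

end InfiniteConcatenation

section Spheres

variable {n j k : ℕ} {z w : EuclideanSpace ℝ (Fin (n + 1))}

/-- The unit vector pointing from the basepoint of the Hawaiian earring to the centers of its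
spheres. -/
def hawAxis (n : ℕ) : EuclideanSpace ℝ (Fin (n + 1)) := EuclideanSpace.single 0 1

lemma norm_hawAxis : ‖hawAxis n‖ = 1 := by
  simp [hawAxis]

lemma hawAxis_apply_zero : hawAxis n 0 = 1 := by
  simp [hawAxis]

lemma mem_hawaiian_iff : z ∈ hawaiian n ↔ ∃ j, 1 ≤ j ∧ z ∈ hawSphere n j := by
  simp [hawaiian]

lemma mem_Ysub_iff : z ∈ Ysub n k ↔ ∃ j, 1 ≤ j ∧ j ≤ k ∧ z ∈ hawSphere n j := by
  simp [Ysub, and_assoc]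

lemma Ysub_subset_hawaiian : Ysub n k ⊆ hawaiian n := fun _ hz =>
  let ⟨j, hj, _, hzj⟩ := mem_Ysub_iff.1 hz
  mem_hawaiian_iff.2 ⟨j, hj, hzj⟩

lemma Ysub_subset_Ysub_succ : Ysub n k ⊆ Ysub n (k + 1) := fun _ hz =>
  let ⟨j, hj, hjk, hzj⟩ := mem_Ysub_iff.1 hz
  mem_Ysub_iff.2 ⟨j, hj, hjk.trans k.le_succ, hzj⟩

lemma mem_hawSphere_iff_norm_sub : z ∈ hawSphere n j ↔ ‖z - (1 / j : ℝ) • hawAxis n‖ = 1 / j := by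
  have hcenter : EuclideanSpace.single (0 : Fin (n + 1)) (1 / j : ℝ) = (1 / j : ℝ) • hawAxis n := by
    ext l
    simp [hawAxis]
  rw [hawSphere, hcenter, mem_sphere_iff_norm]

lemma mem_hawSphere_iff_norm_sq : z ∈ hawSphere n j ↔ ‖z‖ ^ 2 = 2 * (1 / j) * z 0 := by
  have hinner : inner ℝ z ((1 / j : ℝ) • hawAxis n) = 1 / j * z 0 := by
    simp [hawAxis, inner_smul_right, EuclideanSpace.inner_single_right]
  rw [mem_hawSphere_iff_norm_sub, ← sq_eq_sq₀ (norm_nonneg _) (by positivity), norm_sub_sq_real,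
    hinner, norm_smul, norm_hawAxis, Real.norm_of_nonneg (by positivity)]
  constructor <;> intro h <;> linarith

lemma smul_hawAxis_add_mem_hawSphere (hw : ‖w‖ = 1) :
    (1 / j : ℝ) • (hawAxis n + w) ∈ hawSphere n j := by
  rw [mem_hawSphere_iff_norm_sub, smul_add, add_sub_cancel_left, norm_smul, hw, mul_one,
    Real.norm_of_nonneg (by positivity)]

lemma norm_le_of_mem_hawSphere (hz : z ∈ hawSphere n j) : ‖z‖ ≤ 2 / j := by
  have h := norm_le_norm_sub_add z ((1 / j : ℝ) • hawAxis n)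
  rw [mem_hawSphere_iff_norm_sub.1 hz, norm_smul, norm_hawAxis,
    Real.norm_of_nonneg (by positivity)] at h
  linarith [add_div (1 : ℝ) 1 j]

lemma mem_hawSphere_zero_iff : z ∈ hawSphere n 0 ↔ z = 0 := by
  simp [mem_hawSphere_iff_norm_sub]

lemma apply_zero_ne_zero_of_mem_hawSphere (hz : z ∈ hawSphere n j) (h0 : z ≠ 0) : z 0 ≠ 0 := by
  intro h
  rw [mem_hawSphere_iff_norm_sq, h, mul_zero] at hz
  exact h0 (norm_eq_zero.1 (pow_eq_zero_iff two_ne_zero |>.1 hz))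

/-- The radius of the sphere of the Hawaiian earring on which `z ≠ 0` lies. It is `0` at the
basepoint, where the formula reads `0 / 0`. -/
def hawRadius (z : EuclideanSpace ℝ (Fin (n + 1))) : ℝ := ‖z‖ ^ 2 / (2 * z 0)

@[simp] lemma hawRadius_zero : hawRadius (0 : EuclideanSpace ℝ (Fin (n + 1))) = 0 := by
  simp [hawRadius]

lemma hawRadius_eq (hz : z ∈ hawSphere n j) (h0 : z ≠ 0) : hawRadius z = 1 / j := by
  have := apply_zero_ne_zero_of_mem_hawSphere hz h0
  rw [hawRadius, mem_hawSphere_iff_norm_sq.1 hz]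
  field_simp

lemma natCast_ne_zero_of_mem_hawSphere (hz : z ∈ hawSphere n j) (h0 : z ≠ 0) : (j : ℝ) ≠ 0 := by
  rintro hj
  have := norm_le_of_mem_hawSphere hz
  rw [hj, div_zero] at this
  exact h0 (norm_le_zero_iff.1 this)

lemma hawRadius_ne_zero (hz : z ∈ hawSphere n j) (h0 : z ≠ 0) : hawRadius z ≠ 0 := by
  rw [hawRadius_eq hz h0]
  exact one_div_ne_zero (natCast_ne_zero_of_mem_hawSphere hz h0)

lemma abs_hawRadius_le_one (hz : z ∈ hawaiian n) : |hawRadius z| ≤ 1 := by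
  obtain rfl | h0 := eq_or_ne z 0
  · simp
  obtain ⟨j, hj, hzj⟩ := mem_hawaiian_iff.1 hz
  rw [hawRadius_eq hzj h0, abs_of_nonneg (by positivity)]
  exact (div_le_one (by positivity)).2 (by exact_mod_cast hj)

/-- The unit vector pointing from the center of the sphere containing `z` to `z`. It is
`-hawAxis n` at the basepoint, whichever sphere the basepoint is considered to lie on. -/
def hawDir (z : EuclideanSpace ℝ (Fin (n + 1))) : EuclideanSpace ℝ (Fin (n + 1)) :=
  (hawRadius z)⁻¹ • z - hawAxis n

@[simp] lemma hawDir_zero : hawDir (0 : EuclideanSpace ℝ (Fin (n + 1))) = -hawAxis n := by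
  simp [hawDir]

lemma norm_hawDir (hz : z ∈ hawSphere n j) : ‖hawDir z‖ = 1 := by
  obtain rfl | h0 := eq_or_ne z 0
  · rw [hawDir_zero, norm_neg, norm_hawAxis]
  have hr := hawRadius_ne_zero hz h0
  have hsub : ‖z - hawRadius z • hawAxis n‖ = hawRadius z := by
    rw [hawRadius_eq hz h0]
    exact mem_hawSphere_iff_norm_sub.1 hz
  calc ‖hawDir z‖ = ‖(hawRadius z)⁻¹ • (z - hawRadius z • hawAxis n)‖ := by
        rw [hawDir, smul_sub, inv_smul_smul₀ hr]
    _ = |hawRadius z|⁻¹ * hawRadius z := by rw [norm_smul, hsub, norm_inv, Real.norm_eq_abs]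
    _ = 1 := by rw [abs_of_nonneg (hsub ▸ norm_nonneg _), inv_mul_cancel₀ hr]

lemma hawRadius_smul_hawAxis_add_hawDir (hz : z ∈ hawSphere n j) :
    hawRadius z • (hawAxis n + hawDir z) = z := by
  obtain rfl | h0 := eq_or_ne z 0
  · simp
  · rw [hawDir, add_sub_cancel, smul_inv_smul₀ (hawRadius_ne_zero hz h0)]

lemma continuousAt_hawRadius (h : z 0 ≠ 0) : ContinuousAt hawRadius z :=
  ContinuousAt.div (by fun_prop) (by fun_prop) (mul_ne_zero two_ne_zero h)

lemma continuousOn_hawDir : ContinuousOn hawDir (Ysub n k) := by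
  intro z hz
  obtain ⟨j, -, -, hzj⟩ := mem_Ysub_iff.1 hz
  obtain rfl | h0 := eq_or_ne z 0
  · rw [ContinuousWithinAt, hawDir_zero, tendsto_iff_norm_sub_tendsto_zero]
    have hlim : Filter.Tendsto (fun z : EuclideanSpace ℝ (Fin (n + 1)) => k * ‖z‖)
        (𝓝[Ysub n k] 0) (𝓝 0) :=
      tendsto_nhdsWithin_of_tendsto_nhds (Continuous.tendsto' (by fun_prop) _ _ (by simp))
    refine squeeze_zero' (.of_forall fun _ => norm_nonneg _) ?_ hlim
    filter_upwards [self_mem_nhdsWithin] with y hy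
    obtain ⟨i, -, hik, hyi⟩ := mem_Ysub_iff.1 hy
    obtain rfl | hy0 := eq_or_ne y 0
    · simp
    rw [hawDir, sub_neg_eq_add, sub_add_cancel, norm_smul, hawRadius_eq hyi hy0]
    simpa using by gcongr
  · have hr := continuousAt_hawRadius (apply_zero_ne_zero_of_mem_hawSphere hzj h0)
    exact (((hr.inv₀ (hawRadius_ne_zero hzj h0)).smul continuousAt_id).sub
      continuousAt_const).continuousWithinAt

/-- The point in direction `w` on the sphere of the Hawaiian earring containing `z`. -/
def hawPush (z w : EuclideanSpace ℝ (Fin (n + 1))) : EuclideanSpace ℝ (Fin (n + 1)) :=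
  hawRadius z • (hawAxis n + ‖w‖⁻¹ • w)

lemma hawPush_hawDir (hz : z ∈ hawSphere n j) : hawPush z (hawDir z) = z := by
  rw [hawPush, norm_hawDir hz, inv_one, one_smul, hawRadius_smul_hawAxis_add_hawDir hz]

lemma hawPush_mem_hawSphere (hz : z ∈ hawSphere n j) (hw : w ≠ 0) :
    hawPush z w ∈ hawSphere n j := by
  obtain rfl | h0 := eq_or_ne z 0
  · simpa [hawPush] using zero_mem_hawSphere n j
  · rw [hawPush, hawRadius_eq hz h0]
    exact smul_hawAxis_add_mem_hawSphere (norm_smul_inv_norm hw)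

lemma hawDir_hawPush (hz : z ∈ hawSphere n j) (hw : w ≠ 0) (h : z = 0 → w = -hawAxis n) :
    hawDir (hawPush z w) = ‖w‖⁻¹ • w := by
  obtain rfl | h0 := eq_or_ne z 0
  · simp [hawPush, h rfl, norm_hawAxis]
  have hr := hawRadius_ne_zero hz h0
  obtain hp | hp := eq_or_ne (hawPush z w) 0
  · rw [hp, hawDir_zero]
    exact neg_eq_of_add_eq_zero_right ((smul_eq_zero.1 hp).resolve_left hr)
  · have hrad : hawRadius (hawPush z w) = hawRadius z := by
      rw [hawRadius_eq (hawPush_mem_hawSphere hz hw) hp, hawRadius_eq hz h0]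
    rw [hawDir, hrad, hawPush, inv_smul_smul₀ hr, add_sub_cancel_left]

variable {T : Type*} [TopologicalSpace T]

lemma continuous_hawPush {f v : T → EuclideanSpace ℝ (Fin (n + 1))} (hf : Continuous f)
    (hfm : ∀ t, f t ∈ hawaiian n) (hv : Continuous v) (hv0 : ∀ t, v t ≠ 0)
    (h : ∀ t, f t = 0 → v t = -hawAxis n) : Continuous fun t => hawPush (f t) (v t) := by
  have hdir : Continuous fun t => hawAxis n + ‖v t‖⁻¹ • v t :=
    continuous_const.add ((hv.norm.inv₀ fun t => norm_ne_zero_iff.2 (hv0 t)).smul hv)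
  rw [continuous_iff_continuousAt]
  intro t
  by_cases h0 : f t = 0
  · have hdir0 : hawAxis n + ‖v t‖⁻¹ • v t = 0 := by simp [h t h0, norm_hawAxis]
    have hpush0 : hawPush (f t) (v t) = 0 := by rw [hawPush, hdir0, smul_zero]
    rw [ContinuousAt, hpush0]
    refine squeeze_zero_norm (fun s => ?_) (hdir.norm.tendsto' t 0 (by rw [hdir0, norm_zero]))
    rw [hawPush, norm_smul]
    exact mul_le_of_le_one_left (norm_nonneg _) (abs_hawRadius_le_one (hfm s))
  · obtain ⟨j, -, hj⟩ := mem_hawaiian_iff.1 (hfm t)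
    exact ((continuousAt_hawRadius (apply_zero_ne_zero_of_mem_hawSphere hj h0)).comp
      hf.continuousAt).smul hdir.continuousAt

/-- Homotopy of maps into the Hawaiian earring during which every point stays on its sphere.
Since `hawSphere n 0 = {0}`, points at the basepoint do not move. -/
def SpherewiseHomotopic (f g : C(T, EuclideanSpace ℝ (Fin (n + 1)))) : Prop :=
  ∃ F : f.Homotopy g, ∀ (s : I) (t : T) (j : ℕ), f t ∈ hawSphere n j → F (s, t) ∈ hawSphere n j

namespace SpherewiseHomotopic

variable {f g h : C(T, EuclideanSpace ℝ (Fin (n + 1)))}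

lemma mem_hawSphere (H : SpherewiseHomotopic f g) {t : T} (ht : f t ∈ hawSphere n j) :
    g t ∈ hawSphere n j := by
  obtain ⟨F, hF⟩ := H
  simpa using hF 1 t j ht

lemma mem_Ysub (H : SpherewiseHomotopic f g) {t : T} (ht : f t ∈ Ysub n k) : g t ∈ Ysub n k := by
  obtain ⟨j, hj, hjk, htj⟩ := mem_Ysub_iff.1 ht
  exact mem_Ysub_iff.2 ⟨j, hj, hjk, H.mem_hawSphere htj⟩

lemma eq_zero (H : SpherewiseHomotopic f g) {t : T} (ht : f t = 0) : g t = 0 :=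
  mem_hawSphere_zero_iff.1 (H.mem_hawSphere (mem_hawSphere_zero_iff.2 ht))

lemma trans (H : SpherewiseHomotopic f g) (K : SpherewiseHomotopic g h) :
    SpherewiseHomotopic f h := by
  have hfg {j : ℕ} {t : T} (ht : f t ∈ hawSphere n j) := H.mem_hawSphere ht
  obtain ⟨F, hF⟩ := H
  obtain ⟨G, hG⟩ := K
  refine ⟨F.trans G, fun s t j ht => ?_⟩
  rw [ContinuousMap.Homotopy.trans_apply]
  split_ifs
  · exact hF _ t j ht
  · exact hG _ t j (hfg ht)

lemma add {f₁ f₂ g₁ g₂ : C(T, EuclideanSpace ℝ (Fin (n + 1)))} (H₁ : SpherewiseHomotopic f₁ g₁)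
    (H₂ : SpherewiseHomotopic f₂ g₂) (h0 : ∀ t, f₁ t = 0 ∨ f₂ t = 0) :
    SpherewiseHomotopic (f₁ + f₂) (g₁ + g₂) := by
  obtain ⟨F₁, hF₁⟩ := H₁
  obtain ⟨F₂, hF₂⟩ := H₂
  refine ⟨⟨F₁.toContinuousMap + F₂.toContinuousMap, fun t => by simp, fun t => by simp⟩,
    fun s t j ht => ?_⟩
  change F₁ (s, t) + F₂ (s, t) ∈ hawSphere n j
  rw [ContinuousMap.add_apply] at ht
  obtain h | h := h0 t
  · rw [h, zero_add] at ht
    rw [mem_hawSphere_zero_iff.1 (hF₁ s t 0 (mem_hawSphere_zero_iff.2 h)), zero_add]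
    exact hF₂ s t j ht
  · rw [h, add_zero] at ht
    rw [mem_hawSphere_zero_iff.1 (hF₂ s t 0 (mem_hawSphere_zero_iff.2 h)), add_zero]
    exact hF₁ s t j ht

lemma exists_homotopic {N : Type*} {f g : C(N → I, EuclideanSpace ℝ (Fin (n + 1)))}
    (H : SpherewiseHomotopic f g) (p : Ω^ N (Ysub n (k + 1)) (YsubPt n k))
    (hp : ∀ t, p t = f t) :
    ∃ q : Ω^ N (Ysub n (k + 1)) (YsubPt n k), GenLoop.Homotopic p q ∧ ∀ t, q t = g t := by
  obtain ⟨F, hF⟩ := H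
  have hmem (s : I) (t : N → I) : F (s, t) ∈ Ysub n (k + 1) := by
    obtain ⟨j, hj, hjk, hpj⟩ := mem_Ysub_iff.1 (p t).2
    exact mem_Ysub_iff.2 ⟨j, hj, hjk, hF s t j (hp t ▸ hpj)⟩
  have hbdry (s : I) {t : N → I} (ht : t ∈ Cube.boundary N) : F (s, t) = 0 :=
    mem_hawSphere_zero_iff.1 (hF s t 0 (mem_hawSphere_zero_iff.2
      ((hp t).symm.trans (congrArg Subtype.val (p.2 t ht)))))
  let F' : C(I × (N → I), Ysub n (k + 1)) := ⟨fun z => ⟨F z, hmem z.1 z.2⟩, by fun_prop⟩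
  let q : Ω^ N (Ysub n (k + 1)) (YsubPt n k) :=
    ⟨F'.comp ⟨_, .prodMk_right 1⟩, fun t ht => Subtype.ext (hbdry 1 ht)⟩
  refine ⟨q, ⟨⟨⟨F', fun t => Subtype.ext ?_, fun t => rfl⟩, fun s t ht => ?_⟩⟩,
    fun t => F.map_one_left t⟩
  · exact (F.map_zero_left t).trans (hp t).symm
  · exact (Subtype.ext (hbdry s ht)).trans (p.2 t ht).symm

end SpherewiseHomotopic

theorem exists_spherewiseHomotopic_hawPush (f : C(T, EuclideanSpace ℝ (Fin (n + 1))))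
    (hf : ∀ t, f t ∈ hawaiian n) {v : I × T → EuclideanSpace ℝ (Fin (n + 1))} (hv : Continuous v)
    (hv0 : ∀ p, v p ≠ 0) (hstart : ∀ t, v (0, t) = hawDir (f t))
    (hbase : ∀ s t, f t = 0 → v (s, t) = -hawAxis n) :
    ∃ g, SpherewiseHomotopic f g ∧ ∀ t, g t = hawPush (f t) (v (1, t)) := by
  have hcont : Continuous fun p : I × T => hawPush (f p.2) (v p) :=
    continuous_hawPush (f.continuous.comp continuous_snd) (fun p => hf p.2) hv hv0
      fun p => hbase p.1 p.2
  let F : C(I × T, EuclideanSpace ℝ (Fin (n + 1))) := ⟨_, hcont⟩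
  refine ⟨F.comp ⟨_, .prodMk_right 1⟩, ⟨⟨F, fun t => ?_, fun t => rfl⟩, fun s t j ht => ?_⟩,
    fun t => rfl⟩
  · obtain ⟨j, -, hj⟩ := mem_hawaiian_iff.1 (hf t)
    exact (congrArg _ (hstart t)).trans (hawPush_hawDir hj)
  · exact hawPush_mem_hawSphere ht (hv0 _)

end Spheres

section Deformations

open Module

variable {n k : ℕ}

section

variable {T : Type*} [TopologicalSpace T]

lemma norm_hawDir_of_mem_Ysub {z : EuclideanSpace ℝ (Fin (n + 1))} (hz : z ∈ Ysub n k) :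
    ‖hawDir z‖ = 1 :=
  let ⟨_, _, _, hj⟩ := mem_Ysub_iff.1 hz
  norm_hawDir hj

lemma continuous_hawDir_comp (f : C(T, EuclideanSpace ℝ (Fin (n + 1)))) (hf : ∀ t, f t ∈ Ysub n k) :
    Continuous fun t => hawDir (f t) :=
  continuousOn_hawDir.comp_continuous f.continuous hf

/- The straight line from `U` to `u` is slowed down near `-hawAxis n`, where it has to stay put;
this does not change an endpoint lying at the pole `hawAxis n`. -/
lemma exists_homotopy_direction {U u : T → EuclideanSpace ℝ (Fin (n + 1))} (hU : Continuous U)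
    (hu : Continuous u) (hU1 : ∀ t, ‖U t‖ = 1) (hdist : ∀ t, dist (u t) (U t) < 1 / 4) :
    ∃ v : I × T → EuclideanSpace ℝ (Fin (n + 1)), Continuous v ∧ (∀ p, v p ≠ 0) ∧
      (∀ t, v (0, t) = U t) ∧ (∀ s t, U t = -hawAxis n → v (s, t) = -hawAxis n) ∧
      ∀ t, v (1, t) = ‖v (1, t)‖ • hawAxis n → v (1, t) = u t := by
  let cutoff : ℝ → ℝ := fun y => max 0 (min 1 (2 * y))
  let v : I × T → EuclideanSpace ℝ (Fin (n + 1)) := fun p =>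
    U p.2 + ((p.1 : ℝ) * cutoff (U p.2 0)) • (u p.2 - U p.2)
  have hclose (p : I × T) : ‖v p - U p.2‖ < 1 / 4 := by
    have hc : |(p.1 : ℝ) * cutoff (U p.2 0)| ≤ 1 := by
      rw [abs_of_nonneg (mul_nonneg p.1.2.1 (le_max_left _ _))]
      exact mul_le_one₀ p.1.2.2 (le_max_left _ _) (max_le zero_le_one (min_le_left _ _))
    rw [add_sub_cancel_left, norm_smul, ← dist_eq_norm]
    exact (mul_le_of_le_one_left dist_nonneg hc).trans_lt (hdist p.2)
  have hnorm (p : I × T) : 3 / 4 < ‖v p‖ := by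
    have := norm_sub_norm_le (U p.2) (v p)
    rw [hU1, norm_sub_rev] at this
    linarith [hclose p]
  refine ⟨v, by unfold v cutoff; fun_prop, fun p => norm_pos_iff.1 (by linarith [hnorm p]),
    by simp [v], fun s t h => by simp [v, cutoff, h, hawAxis_apply_zero], fun t ht => ?_⟩
  have hcutoff : cutoff (U t 0) = 1 := by
    have hv1 : v (1, t) 0 = ‖v (1, t)‖ := by
      simpa [hawAxis_apply_zero] using congrArg (fun y => y 0) ht
    have h0 := (PiLp.norm_apply_le (v (1, t) - U t) 0).trans_lt (hclose (1, t))
    rw [PiLp.sub_apply, hv1, Real.norm_eq_abs] at h0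
    have : 1 ≤ 2 * U t 0 := by linarith [(abs_lt.1 h0).2, hnorm (1, t)]
    simp [cutoff, this]
  simp [v, hcutoff]

theorem exists_spherewiseHomotopic_of_dist_hawDir_lt (f : C(T, EuclideanSpace ℝ (Fin (n + 1))))
    (hf : ∀ t, f t ∈ Ysub n k) {u : T → EuclideanSpace ℝ (Fin (n + 1))} (hu : Continuous u)
    (hdist : ∀ t, dist (u t) (hawDir (f t)) < 1 / 4) :
    ∃ g, SpherewiseHomotopic f g ∧
      ∀ t, hawDir (g t) = hawAxis n → ∃ r : ℝ, u t = r • hawAxis n := by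
  obtain ⟨v, hv, hv0, hstart, hbase, hpole⟩ := exists_homotopy_direction
    (continuous_hawDir_comp f hf) hu (fun t => norm_hawDir_of_mem_Ysub (hf t)) hdist
  replace hbase (s : I) (t : T) (h : f t = 0) : v (s, t) = -hawAxis n :=
    hbase s t (by rw [h, hawDir_zero])
  obtain ⟨g, hg, hg1⟩ := exists_spherewiseHomotopic_hawPush f
    (fun t => Ysub_subset_hawaiian (hf t)) hv hv0 hstart hbase
  refine ⟨g, hg, fun t ht => ⟨‖v (1, t)‖, ?_⟩⟩
  obtain ⟨j, -, -, hj⟩ := mem_Ysub_iff.1 (hf t)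
  rw [hg1, hawDir_hawPush hj (hv0 _) (hbase 1 t),
    inv_smul_eq_iff₀ (norm_ne_zero_iff.2 (hv0 _))] at ht
  exact (hpole t ht).symm.trans ht

lemma one_sub_smul_sub_smul_ne_zero {E : Type*} [NormedAddCommGroup E] [NormedSpace ℝ E]
    {u v : E} {c : ℝ} (hc : c ∈ Set.Icc (0 : ℝ) 1) (hu : ‖u‖ = 1) (hv : ‖v‖ = 1)
    (h : u = v → c = 0) : (1 - c) • u - c • v ≠ 0 := by
  intro h0
  have heq := sub_eq_zero.1 h0
  have hnorm := congrArg norm heq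
  rw [norm_smul, norm_smul, hu, hv, Real.norm_of_nonneg hc.1,
    Real.norm_of_nonneg (sub_nonneg.2 hc.2)] at hnorm
  obtain rfl : c = 1 / 2 := by linarith
  norm_num at h
  exact h (smul_right_injective E (by norm_num : (1 / 2 : ℝ) ≠ 0)
    (by norm_num at heq ⊢; exact heq))

theorem exists_spherewiseHomotopic_eqOn_zero [NormalSpace T]
    (f : C(T, EuclideanSpace ℝ (Fin (n + 1)))) (hf : ∀ t, f t ∈ Ysub n k) {C : Set T}
    (hC : IsClosed C) (hCf : ∀ t ∈ C, hawDir (f t) ≠ hawAxis n) :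
    ∃ g, SpherewiseHomotopic f g ∧ ∀ t ∈ C, g t = 0 := by
  have hU : Continuous fun p : I × T => hawDir (f p.2) :=
    (continuous_hawDir_comp f hf).comp continuous_snd
  obtain ⟨μ, hμ0, hμ1, hμ⟩ := exists_continuous_zero_one_of_isClosed
    (isClosed_eq (continuous_hawDir_comp f hf) continuous_const) hC
    (Set.disjoint_left.2 fun t ht htC => hCf t htC ht)
  let v : I × T → EuclideanSpace ℝ (Fin (n + 1)) := fun p =>
    (1 - (p.1 : ℝ) * μ p.2) • hawDir (f p.2) - ((p.1 : ℝ) * μ p.2) • hawAxis n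
  have hv0 (p : I × T) : v p ≠ 0 := by
    refine one_sub_smul_sub_smul_ne_zero ⟨mul_nonneg p.1.2.1 (hμ _).1,
      mul_le_one₀ p.1.2.2 (hμ _).1 (hμ _).2⟩ (norm_hawDir_of_mem_Ysub (hf _)) norm_hawAxis
      fun h => ?_
    rw [hμ0 h, Pi.zero_apply, mul_zero]
  obtain ⟨g, hg, hg1⟩ := exists_spherewiseHomotopic_hawPush f (fun t => Ysub_subset_hawaiian (hf t))
    (v := v) (by unfold v; fun_prop) hv0 (by simp [v]) (by intro s t h; simp [v, h, sub_smul])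
  refine ⟨g, hg, fun t ht => ?_⟩
  rw [hg1, hawPush]
  simp [v, hμ1 ht, norm_hawAxis]

end

lemma exists_contDiff_forall_dist_lt {N F : Type*} [Fintype N] [NormedAddCommGroup F]
    [NormedSpace ℝ F] (U : C(N → I, F)) {ε : ℝ} (hε : 0 < ε) :
    ∃ G : (N → ℝ) → F, ContDiff ℝ 1 G ∧ ∀ t : N → I, dist (G fun l => t l) (U t) < ε := by
  have hext : Continuous fun y : N → ℝ => U fun l => Set.projIcc 0 1 zero_le_one (y l) :=
    U.continuous.comp (continuous_pi fun l => continuous_projIcc.comp (continuous_apply l))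
  obtain ⟨G, hG, hdist, -⟩ :=
    hext.exists_contDiff_approx 1 (continuous_const (y := ε)) fun _ => hε
  exact ⟨G, hG, fun t => by simpa using hdist fun l => t l⟩

theorem exists_generic_translates {N F : Type*} [Fintype N] [NormedAddCommGroup F]
    [NormedSpace ℝ F] [FiniteDimensional ℝ F] (c : N) {G H : (N → ℝ) → F} (hG : ContDiff ℝ 1 G)
    (hH : ContDiff ℝ 1 H) (hcard : Fintype.card N + 3 < 2 * finrank ℝ F) (e : F) {ε : ℝ}
    (hε : 0 < ε) :
    ∃ a b : F, ‖a‖ < ε ∧ ‖b‖ < ε ∧ ∀ x y : N → ℝ, (∀ l ≠ c, x l = y l) →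
      ∀ r s : ℝ, G x - a = r • e → H y - b ≠ s • e := by
  classical
  let Φ : (N → ℝ) × ℝ × ℝ × ℝ → F × F := fun p =>
    (G p.1 - p.2.2.1 • e, H (p.1 + p.2.1 • Pi.single c 1) - p.2.2.2 • e)
  have hΦ : ContDiff ℝ 1 Φ := by fun_prop
  have hdense := hΦ.dense_compl_range_of_finrank_lt_finrank (by simp; omega)
  obtain ⟨⟨a, b⟩, hab, hmem⟩ := hdense.exists_dist_lt (0 : F × F) hε
  rw [dist_zero_left] at hmem
  refine ⟨a, b, (norm_fst_le _).trans_lt hmem, (norm_snd_le _).trans_lt hmem,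
    fun x y hxy r s hr hs => hab ⟨(x, y c - x c, r, s), ?_⟩⟩
  have hy : x + (y c - x c) • Pi.single c (1 : ℝ) = y := by
    ext l
    obtain rfl | hl := eq_or_ne l c
    · simp
    · simp [hl, hxy l hl]
  simp only [Φ, hy, ← hr, ← hs, sub_sub_cancel]

theorem exists_generic_approximations {N F : Type*} [Fintype N] [NormedAddCommGroup F]
    [NormedSpace ℝ F] [FiniteDimensional ℝ F] (c : N) (U V : C(N → I, F))
    (hcard : Fintype.card N + 3 < 2 * finrank ℝ F) (e : F) {ε : ℝ} (hε : 0 < ε) :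
    ∃ u v : C(N → I, F), (∀ t, dist (u t) (U t) < ε) ∧ (∀ t, dist (v t) (V t) < ε) ∧
      ∀ s t, (∀ l ≠ c, s l = t l) → ∀ r r' : ℝ, u s = r • e → v t ≠ r' • e := by
  obtain ⟨G, hG, hGU⟩ := exists_contDiff_forall_dist_lt U (half_pos hε)
  obtain ⟨H, hH, hHV⟩ := exists_contDiff_forall_dist_lt V (half_pos hε)
  obtain ⟨a, b, ha, hb, hab⟩ := exists_generic_translates c hG hH hcard e (half_pos hε)
  have hdist {y z d : F} (hyz : dist y z < ε / 2) (hd : ‖d‖ < ε / 2) : dist (y - d) z < ε :=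
    calc dist (y - d) z ≤ ‖d‖ + dist y z :=
          (dist_triangle _ _ _).trans_eq (by rw [dist_self_sub_left])
      _ < ε := by linarith
  refine ⟨⟨fun t => G (fun l => t l) - a, (hG.continuous.comp (by fun_prop)).sub continuous_const⟩,
    ⟨fun t => H (fun l => t l) - b, (hH.continuous.comp (by fun_prop)).sub continuous_const⟩,
    fun t => hdist (hGU t) ha, fun t => hdist (hHV t) hb, fun s t hst => ?_⟩
  exact hab _ _ fun l hl => congrArg Subtype.val (hst l hl)

variable {N : Type*}

theorem exists_spherewiseHomotopic_poles_separated [Fintype N] (hn : Fintype.card N + 1 < 2 * n)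
    (c : N) (fA fB : C(N → I, EuclideanSpace ℝ (Fin (n + 1)))) (hA : ∀ t, fA t ∈ Ysub n k)
    (hB : ∀ t, fB t ∈ Ysub n k) :
    ∃ gA gB, SpherewiseHomotopic fA gA ∧ SpherewiseHomotopic fB gB ∧
      ∀ s t, (∀ l ≠ c, s l = t l) → hawDir (gA s) = hawAxis n → hawDir (gB t) ≠ hawAxis n := by
  obtain ⟨u, v, hu, hv, huv⟩ := exists_generic_approximations c ⟨_, continuous_hawDir_comp fA hA⟩
    ⟨_, continuous_hawDir_comp fB hB⟩ (by simp; omega) (hawAxis n) (ε := 1 / 4) (by norm_num)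
  obtain ⟨gA, hgA, hpA⟩ := exists_spherewiseHomotopic_of_dist_hawDir_lt fA hA u.continuous hu
  obtain ⟨gB, hgB, hpB⟩ := exists_spherewiseHomotopic_of_dist_hawDir_lt fB hB v.continuous hv
  refine ⟨gA, gB, hgA, hgB, fun s t hst hs ht => ?_⟩
  obtain ⟨r, hr⟩ := hpA s hs
  obtain ⟨r', hr'⟩ := hpB t ht
  exact huv s t hst r r' hr hr'

lemma exists_continuous_graph_separating [DecidableEq N] (c : N) {A B : Set (N → I)}
    (hA : IsClosed A) (hB : IsClosed B) (hAB : ∀ s ∈ A, ∀ t ∈ B, ∃ l ≠ c, s l ≠ t l) :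
    ∃ φ : (N → I) → I, Continuous φ ∧ (∀ t s, φ (Function.update t c s) = φ t) ∧
      (∀ t ∈ A, φ t = 1) ∧ ∀ t ∈ B, φ t = 0 := by
  let proj : (N → I) → N → I := fun t => Function.update t c 0
  have hproj : Continuous proj := continuous_id.update c continuous_const
  have hclosed {S : Set (N → I)} (hS : IsClosed S) : IsClosed (proj '' S) :=
    (hS.isCompact.image hproj).isClosed
  have hdisj : Disjoint (proj '' B) (proj '' A) := by
    rw [Set.disjoint_left]
    rintro _ ⟨t, ht, rfl⟩ ⟨s, hs, hst⟩
    obtain ⟨l, hl, hne⟩ := hAB s hs t ht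
    exact hne (by simpa [proj, hl] using congrFun hst l)
  obtain ⟨φ, hφ0, hφ1, hφ⟩ :=
    exists_continuous_zero_one_of_isClosed (hclosed hB) (hclosed hA) hdisj
  exact ⟨fun t => ⟨φ (proj t), hφ _⟩, (φ.continuous.comp hproj).subtype_mk _,
    fun t s => by simp [proj], fun t ht => Subtype.ext (hφ1 ⟨t, ht, rfl⟩),
    fun t ht => Subtype.ext (hφ0 ⟨t, ht, rfl⟩)⟩

lemma hawDir_ne_hawAxis_of_eq_zero {z : EuclideanSpace ℝ (Fin (n + 1))} (hz : z = 0) :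
    hawDir z ≠ hawAxis n := by
  rw [hz, hawDir_zero]
  intro h
  have h1 := congrArg (fun y => y 0) h
  norm_num [hawAxis_apply_zero] at h1

theorem exists_spherewiseHomotopic_separated_by_graph [Fintype N] [DecidableEq N]
    (hn : Fintype.card N + 1 < 2 * n) (c : N) {fA fB : C(N → I, EuclideanSpace ℝ (Fin (n + 1)))}
    (hA : ∀ t, fA t ∈ Ysub n k) (hB : ∀ t, fB t ∈ Ysub n k)
    (hA0 : ∀ t ∈ Cube.boundary N, fA t = 0) (hB0 : ∀ t ∈ Cube.boundary N, fB t = 0) :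
    ∃ gA gB φ, SpherewiseHomotopic fA gA ∧ SpherewiseHomotopic fB gB ∧ Continuous φ ∧
      (∀ t s, φ (Function.update t c s) = φ t) ∧
      (∀ t, φ t ≤ t c → gA t = 0) ∧ ∀ t, t c ≤ φ t → gB t = 0 := by
  obtain ⟨gA, gB, hgA, hgB, hpoles⟩ :=
    exists_spherewiseHomotopic_poles_separated hn c fA fB hA hB
  have hgAY (t) := hgA.mem_Ysub (hA t)
  have hgBY (t) := hgB.mem_Ysub (hB t)
  obtain ⟨φ, hφ, hφc, hφA, hφB⟩ := exists_continuous_graph_separating c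
    (isClosed_eq (continuous_hawDir_comp gA hgAY) (continuous_const (y := hawAxis n)))
    (isClosed_eq (continuous_hawDir_comp gB hgBY) (continuous_const (y := hawAxis n)))
    fun s hs t ht => by
      by_contra! hst
      exact hpoles s t hst hs ht
  obtain ⟨kA, hkA, hkA0⟩ := exists_spherewiseHomotopic_eqOn_zero gA hgAY
    (isClosed_le hφ (continuous_apply c)) fun t ht hpole =>
      hawDir_ne_hawAxis_of_eq_zero (hgA.eq_zero (hA0 t
        ⟨c, Or.inr (unitInterval.le_one'.antisymm (hφA t hpole ▸ ht))⟩)) hpole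
  obtain ⟨kB, hkB, hkB0⟩ := exists_spherewiseHomotopic_eqOn_zero gB hgBY
    (isClosed_le (continuous_apply c) hφ) fun t ht hpole =>
      hawDir_ne_hawAxis_of_eq_zero (hgB.eq_zero (hB0 t
        ⟨c, Or.inl (unitInterval.nonneg'.antisymm' (hφB t hpole ▸ ht))⟩)) hpole
  exact ⟨kA, kB, φ, hgA.trans hkA, hgB.trans hkB, hφ, hφc, hkA0, hkB0⟩

end Deformations

section Splitting

variable {N : Type*} {n i : ℕ} {ρ : C(Ysub n (i + 2), Ysub n (i + 1))}

lemma exists_decomposition_of_retraction (hfix : ∀ z, z.1 ∈ Ysub n (i + 1) → (ρ z).1 = z)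
    (hcoll : ∀ z, z.1 ∈ hawSphere n (i + 2) → (ρ z).1 = 0)
    (p : Ω^ N (Ysub n (i + 2)) (YsubPt n (i + 1))) :
    ∃ fA fB : C(N → I, EuclideanSpace ℝ (Fin (n + 1))), (∀ t, p t = (fA + fB) t) ∧
      (∀ t, fA t ∈ Ysub n (i + 1)) ∧ (∀ t, fB t ∈ hawSphere n (i + 2)) ∧
      ∀ t, fA t = 0 ∨ fB t = 0 := by
  have hdicho (t) : (ρ (p t)).1 = p t ∨ (ρ (p t)).1 = 0 ∧ (p t).1 ∈ hawSphere n (i + 2) := by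
    obtain ⟨j, hj, hji, hpj⟩ := mem_Ysub_iff.1 (p t).2
    obtain hj' | rfl := Nat.le_succ_iff.1 hji
    · exact Or.inl (hfix _ (mem_Ysub_iff.2 ⟨j, hj, hj', hpj⟩))
    · exact Or.inr ⟨hcoll _ hpj, hpj⟩
  refine ⟨⟨fun t => ρ (p t), by fun_prop⟩, ⟨fun t => p t - ρ (p t), by fun_prop⟩, fun t => ?_,
    fun t => (ρ (p t)).2, fun t => ?_, fun t => (hdicho t).symm.imp And.left ?_⟩
  · exact (add_sub_cancel (ρ (p t)).1 (p t).1).symm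
  · obtain h | ⟨h, hS⟩ := hdicho t
    · simpa [h] using zero_mem_hawSphere n (i + 2)
    · simpa [h] using hS
  · intro h
    simp [h]

/-- The inclusion of `Ysub n (i + 1)` into `Ysub n (i + 2)`. -/
def ysubInclusion (n i : ℕ) : C(Ysub n (i + 1), Ysub n (i + 2)) := .inclusion Ysub_subset_Ysub_succ

lemma ysubInclusion_ysubPt : ysubInclusion n i (YsubPt n i) = YsubPt n (i + 1) := rfl

variable [Fintype N] [DecidableEq N]

theorem exists_homotopic_transAt_of_retraction (hn : Fintype.card N + 1 < 2 * n) (c : N)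
    (hfix : ∀ z, z.1 ∈ Ysub n (i + 1) → (ρ z).1 = z)
    (hcoll : ∀ z, z.1 ∈ hawSphere n (i + 2) → (ρ z).1 = 0)
    (p : Ω^ N (Ysub n (i + 2)) (YsubPt n (i + 1))) :
    ∃ a b : Ω^ N (Ysub n (i + 2)) (YsubPt n (i + 1)),
      GenLoop.Homotopic p (GenLoop.transAt c a b) ∧
      (∀ t, (a t).1 ∈ Ysub n (i + 1)) ∧ ∀ t, (b t).1 ∈ hawSphere n (i + 2) := by
  obtain ⟨fA, fB, hp, hfA, hfB, h0⟩ := exists_decomposition_of_retraction hfix hcoll p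
  have hbdry (t) (ht : t ∈ Cube.boundary N) : fA t = 0 ∧ fB t = 0 := by
    have hsum : fA t + fB t = 0 := (hp t).symm.trans (congrArg Subtype.val (p.2 t ht))
    obtain h | h := h0 t
    · exact ⟨h, by rwa [h, zero_add] at hsum⟩
    · exact ⟨by rwa [h, add_zero] at hsum, h⟩
  obtain ⟨gA, gB, φ, hgA, hgB, hφ, hφc, hgA0, hgB0⟩ :=
    exists_spherewiseHomotopic_separated_by_graph hn c (fun t => Ysub_subset_Ysub_succ (hfA t))
      (fun t => mem_Ysub_iff.2 ⟨_, by omega, le_rfl, hfB t⟩) (fun t ht => (hbdry t ht).1)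
      fun t ht => (hbdry t ht).2
  obtain ⟨q, hpq, hq⟩ := (hgA.add hgB h0).exists_homotopic p hp
  have hqA (t) (ht : t c ≤ φ t) : (q t).1 = gA t := by
    rw [hq, ContinuousMap.add_apply, hgB0 t ht, add_zero]
  have hqB (t) (ht : φ t ≤ t c) : (q t).1 = gB t := by
    rw [hq, ContinuousMap.add_apply, hgA0 t ht, zero_add]
  obtain ⟨a, b, hab, ha, hb⟩ := exists_homotopic_transAt_of_graph c q hφ hφc fun t ht =>
    Subtype.ext ((hqA t ht.le).trans (hgA0 t ht.ge))
  refine ⟨a, b, hpq.trans hab, fun t => ?_, fun t => ?_⟩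
  · obtain ⟨s, hs, hst⟩ := ha t
    rw [← hst, hqA s hs]
    exact hgA.mem_Ysub (hfA s)
  · obtain ⟨s, hs, hst⟩ := hb t
    rw [← hst, hqB s hs]
    exact hgB.mem_hawSphere (hfB s)

theorem exists_eq_loopClass_mul_inclusion [Nonempty N] (hn : Fintype.card N + 1 < 2 * n)
    (hρ : ρ (YsubPt n (i + 1)) = YsubPt n i) (hfix : ∀ z, z.1 ∈ Ysub n (i + 1) → (ρ z).1 = z)
    (hcoll : ∀ z, z.1 ∈ hawSphere n (i + 2) → (ρ z).1 = 0)
    (γ : HomotopyGroup N (Ysub n (i + 2)) (YsubPt n (i + 1))) :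
    ∃ b : Ω^ N (Ysub n (i + 2)) (YsubPt n (i + 1)), (∀ t, (b t).1 ∈ hawSphere n (i + 2)) ∧
      γ = loopClass b *
        piInduced N (ysubInclusion n i) ysubInclusion_ysubPt (piInduced N ρ hρ γ) := by
  obtain ⟨p, rfl⟩ := exists_loopClass_eq γ
  obtain ⟨a, b, hp, ha, hb⟩ :=
    exists_homotopic_transAt_of_retraction hn (Classical.arbitrary N) hfix hcoll p
  refine ⟨b, hb, ?_⟩
  have hρb : piInduced N ρ hρ (loopClass b) = 1 :=
    piInduced_loopClass_eq_one hρ fun t => Subtype.ext (hcoll _ (hb t))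
  have hρa : piInduced N ρ hρ (loopClass a) = loopClass (GenLoop.compCM ρ hρ a) :=
    piInduced_loopClass hρ fun _ => rfl
  have hιρa : piInduced N (ysubInclusion n i) ysubInclusion_ysubPt
      (loopClass (GenLoop.compCM ρ hρ a)) = loopClass a :=
    piInduced_loopClass _ fun t => Subtype.ext (hfix _ (ha t))
  rw [loopClass_eq_loopClass hp, loopClass_transAt, piInduced_mul, hρb, one_mul, hρa, hιρa]

end Splitting

section Hawaiian

open Filter

variable {n : ℕ}

lemma tendstoUniformly_hawaiianPt {T : Type*} {f : ℕ → T → hawaiian n}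
    (hf : ∀ i t, (f i t).1 ∈ hawSphere n (i + 2)) :
    TendstoUniformly f (fun _ => hawaiianPt n) atTop := by
  rw [Metric.tendstoUniformly_iff]
  intro ε hε
  filter_upwards [((tendsto_const_div_atTop_nhds_zero_nat 2).comp
    (tendsto_add_atTop_nat 2)).eventually_lt_const hε] with i hi t
  rw [dist_comm, Subtype.dist_eq]
  exact (dist_zero_right _).trans_lt ((norm_le_of_mem_hawSphere (hf i t)).trans_lt hi)

theorem beta_surjective_general {N : Type*} [Fintype N] [Nonempty N]
    (hn : Fintype.card N + 1 < 2 * n) (R : ∀ i : ℕ, C(hawaiian n, Ysub n (i + 1)))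
    (hRfix : ∀ i z, z.1 ∈ Ysub n (i + 1) → (R i z).1 = z)
    (hRcoll : ∀ i j, i + 1 < j → ∀ z, z.1 ∈ hawSphere n j → (R i z).1 = 0)
    (hR0 : ∀ i, R i (hawaiianPt n) = YsubPt n i)
    (r : ∀ i : ℕ, C(Ysub n (i + 2), Ysub n (i + 1)))
    (hrfix : ∀ i z, z.1 ∈ Ysub n (i + 1) → (r i z).1 = z)
    (hrcoll : ∀ i z, z.1 ∈ hawSphere n (i + 2) → (r i z).1 = 0)
    (hr0 : ∀ i, r i (YsubPt n (i + 1)) = YsubPt n i)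
    (γ : ∀ i : ℕ, HomotopyGroup N (Ysub n (i + 1)) (YsubPt n i))
    (hγ : ∀ i, piInduced N (r i) (hr0 i) (γ (i + 1)) = γ i) :
    ∃ g : HomotopyGroup N (hawaiian n) (hawaiianPt n),
      ∀ i : ℕ, piInduced N (R i) (hR0 i) g = γ i := by
  classical
  let inc (i : ℕ) : C(Ysub n (i + 1), hawaiian n) := .inclusion Ysub_subset_hawaiian
  have hinc (i : ℕ) : inc i (YsubPt n i) = hawaiianPt n := rfl
  choose b hbS hγb using fun i =>
    exists_eq_loopClass_mul_inclusion hn (hr0 i) (hrfix i) (hrcoll i) (γ (i + 1))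
  let b' (i : ℕ) : Ω^ N (hawaiian n) (hawaiianPt n) := GenLoop.compCM (inc (i + 1)) (hinc _) (b i)
  obtain ⟨e, he, heS⟩ := exists_infinite_concatenation (Classical.arbitrary N)
    (tendstoUniformly_hawaiianPt (f := fun i => b' i) hbS)
  have telescope (i : ℕ) : loopClass (e 0) * piInduced N (inc 0) (hinc 0) (γ 0) =
      loopClass (e i) * piInduced N (inc i) (hinc i) (γ i) := by
    induction i with
    | zero => rfl
    | succ i ih =>
      rw [ih, he i, loopClass_transAt, mul_assoc, hγb i, hγ i, piInduced_mul,
        piInduced_loopClass (q := b' i) (hinc _) fun _ => rfl,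
        piInduced_piInduced ysubInclusion_ysubPt (hinc (i + 1)) (hinc i) fun _ => rfl]
  refine ⟨loopClass (e 0) * piInduced N (inc 0) (hinc 0) (γ 0), fun i => ?_⟩
  have hRe (t) : R i (e i t) = YsubPt n i := by
    obtain h | ⟨j, hj, s, hs⟩ := heS i t
    · rw [h, hR0]
    · exact hs ▸ Subtype.ext (hRcoll i (j + 2) (by omega) _ (hbS j s))
  rw [telescope i, piInduced_mul, piInduced_loopClass_eq_one _ hRe, one_mul,
    piInduced_piInduced (χ := .id _) (hinc i) (hR0 i) rfl fun z => Subtype.ext (hRfix i _ z.2),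
    piInduced_eq_self rfl fun _ => rfl]

end Hawaiian

/-- For `n = m+2 ≥ 2`, the natural homomorphism
`β_n : π_n(ℋ_n, 0) → lim← π_n(Y_i^{(n)}, 0)` is surjective: every family of classes
`γ i ∈ π_n(Y_{i+1}^{(n)}, 0)` compatible under the retractions `r_k^i` is induced by a
single class in `π_n(ℋ_n, 0)` via the retractions `R_i`. -/
theorem beta_surjective (m : ℕ)
    (R : ∀ i : ℕ, C(↥(hawaiian (m+2)), ↥(Ysub (m+2) (i+1))))
    (hRfix : ∀ (i : ℕ) (z : ↥(hawaiian (m+2))),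
      (z : EuclideanSpace ℝ (Fin (m+3))) ∈ Ysub (m+2) (i+1) →
      ((R i z : ↥(Ysub (m+2) (i+1))) : EuclideanSpace ℝ (Fin (m+3))) = z)
    (hRcoll : ∀ (i j : ℕ), i + 1 < j → ∀ z : ↥(hawaiian (m+2)),
      (z : EuclideanSpace ℝ (Fin (m+3))) ∈ hawSphere (m+2) j →
      ((R i z : ↥(Ysub (m+2) (i+1))) : EuclideanSpace ℝ (Fin (m+3))) = 0)
    (hR0 : ∀ i : ℕ, R i (hawaiianPt (m+2)) = YsubPt (m+2) i)
    (r : ∀ i k : ℕ, k ≤ i → C(↥(Ysub (m+2) (i+1)), ↥(Ysub (m+2) (k+1))))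
    (hrfix : ∀ (i k : ℕ) (hki : k ≤ i) (z : ↥(Ysub (m+2) (i+1))),
      (z : EuclideanSpace ℝ (Fin (m+3))) ∈ Ysub (m+2) (k+1) →
      ((r i k hki z : ↥(Ysub (m+2) (k+1))) : EuclideanSpace ℝ (Fin (m+3))) = z)
    (hrcoll : ∀ (i k : ℕ) (hki : k ≤ i) (j : ℕ), k + 1 < j → j ≤ i + 1 →
      ∀ z : ↥(Ysub (m+2) (i+1)),
      (z : EuclideanSpace ℝ (Fin (m+3))) ∈ hawSphere (m+2) j →
      ((r i k hki z : ↥(Ysub (m+2) (k+1))) : EuclideanSpace ℝ (Fin (m+3))) = 0)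
    (hr0 : ∀ (i k : ℕ) (hki : k ≤ i), r i k hki (YsubPt (m+2) i) = YsubPt (m+2) k)
    (γ : ∀ i : ℕ, HomotopyGroup (Fin (m+2)) (Ysub (m+2) (i+1)) (YsubPt (m+2) i))
    (hγ : ∀ (k i : ℕ) (hki : k ≤ i),
      piInduced (Fin (m+2)) (r i k hki) (hr0 i k hki) (γ i) = γ k) :
    ∃ g : HomotopyGroup (Fin (m+2)) (hawaiian (m+2)) (hawaiianPt (m+2)),
      ∀ i : ℕ, piInduced (Fin (m+2)) (R i) (hR0 i) g = γ i :=
  beta_surjective_general (by simp; omega) R hRfix hRcoll hR0 (fun i => r (i + 1) i i.le_succ)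
    (fun i => hrfix (i + 1) i i.le_succ)
    (fun i => hrcoll (i + 1) i i.le_succ (i + 2) (Nat.lt_succ_self _) le_rfl)
    (fun i => hr0 (i + 1) i i.le_succ) γ fun i => hγ i (i + 1) i.le_succ
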